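/- arXiv:1907.02135 — 2 statements merged into one kernel-verified Lean document; each statement's English description precedes it below -/
import Mathlib

section
/- The Racah algebra ℜ contains no zero divisors: for all u, v ∈ ℜ, if u·v = 0 then u = 0 or v = 0. -/
open scoped TensorProduct

noncomputable section

namespace RacahPaper

variable (F : Type) [Field F]

/-- Defining relations of `U(sl₂)`: generators `e = ι 0`, `f = ι 1`, `h = ι 2` with
`he - eh = 2e`, `hf - fh = -2f`, `ef - fe = h`. -/
inductive slRel : FreeAlgebra F (Fin 3) → FreeAlgebra F (Fin 3) → Prop
  | he : slRel (FreeAlgebra.ι F 2 * FreeAlgebra.ι F 0 - FreeAlgebra.ι F 0 * FreeAlgebra.ι F 2)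
      (2 * FreeAlgebra.ι F 0)
  | hf : slRel (FreeAlgebra.ι F 2 * FreeAlgebra.ι F 1 - FreeAlgebra.ι F 1 * FreeAlgebra.ι F 2)
      (-(2 * FreeAlgebra.ι F 1))
  | ef : slRel (FreeAlgebra.ι F 0 * FreeAlgebra.ι F 1 - FreeAlgebra.ι F 1 * FreeAlgebra.ι F 0)
      (FreeAlgebra.ι F 2)

/-- The universal enveloping algebra `U(sl₂)`. -/
abbrev U := RingQuot (slRel F)

/-- The generator `e` of `U(sl₂)`. -/
def e : U F := RingQuot.mkAlgHom F (slRel F) (FreeAlgebra.ι F 0)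

/-- The generator `f` of `U(sl₂)`. -/
def f : U F := RingQuot.mkAlgHom F (slRel F) (FreeAlgebra.ι F 1)

/-- The generator `h` of `U(sl₂)`. -/
def h : U F := RingQuot.mkAlgHom F (slRel F) (FreeAlgebra.ι F 2)

/-- The equitable generator `x = -f - h/2`. -/
def ux : U F := -f F - (2 : F)⁻¹ • h F

/-- The equitable generator `y = h/2`. -/
def uy : U F := (2 : F)⁻¹ • h F

/-- The equitable generator `z = e - h/2`. -/
def uz : U F := e F - (2 : F)⁻¹ • h F

/-- The normalized Casimir element `Λ = ef + h(h-2)/4` of `U(sl₂)`. -/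
def Lam : U F := e F * f F + (4 : F)⁻¹ • (h F * (h F - 2))

/-- `ν_x = f/2`. -/
def nux : U F := (2 : F)⁻¹ • f F

/-- `ν_z = e/2`. -/
def nuz : U F := (2 : F)⁻¹ • e F

/-- `U_n`: the span of the `e^i h^j f^k` with `k - i = n`. -/
def Usub (n : ℤ) : Submodule F (U F) :=
  Submodule.span F {u : U F | ∃ i j k : ℕ, (k : ℤ) - (i : ℤ) = n ∧ u = e F ^ i * h F ^ j * f F ^ k}

-- Racah algebra
/-- Generator `A` of the free algebra. -/
def fA : FreeAlgebra F (Fin 4) := FreeAlgebra.ι F 0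
/-- Generator `B` of the free algebra. -/
def fB : FreeAlgebra F (Fin 4) := FreeAlgebra.ι F 1
/-- Generator `C` of the free algebra. -/
def fC : FreeAlgebra F (Fin 4) := FreeAlgebra.ι F 2
/-- Generator `D` of the free algebra. -/
def fD : FreeAlgebra F (Fin 4) := FreeAlgebra.ι F 3

/-- `α = [A,D] + AC - BA` in the free algebra. -/
def falpha : FreeAlgebra F (Fin 4) := (fA F * fD F - fD F * fA F) + fA F * fC F - fB F * fA F
/-- `β = [B,D] + BA - CB` in the free algebra. -/
def fbeta : FreeAlgebra F (Fin 4) := (fB F * fD F - fD F * fB F) + fB F * fA F - fC F * fB F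
/-- `γ = [C,D] + CB - AC` in the free algebra. -/
def fgamma : FreeAlgebra F (Fin 4) := (fC F * fD F - fD F * fC F) + fC F * fB F - fA F * fC F

/-- Defining relations of the Racah algebra: `[A,B] = [B,C] = [C,A] = 2D` and each of
`α, β, γ` commutes with each of the generators `A, B, C, D`. -/
inductive racahRel : FreeAlgebra F (Fin 4) → FreeAlgebra F (Fin 4) → Prop
  | AB : racahRel (fA F * fB F - fB F * fA F) (2 * fD F)
  | BC : racahRel (fB F * fC F - fC F * fB F) (2 * fD F)
  | CA : racahRel (fC F * fA F - fA F * fC F) (2 * fD F)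
  | calpha (i : Fin 4) : racahRel (falpha F * FreeAlgebra.ι F i) (FreeAlgebra.ι F i * falpha F)
  | cbeta (i : Fin 4) : racahRel (fbeta F * FreeAlgebra.ι F i) (FreeAlgebra.ι F i * fbeta F)
  | cgamma (i : Fin 4) : racahRel (fgamma F * FreeAlgebra.ι F i) (FreeAlgebra.ι F i * fgamma F)

/-- The Racah algebra `ℜ`. -/
abbrev Racah := RingQuot (racahRel F)

/-- Generator `A` of the Racah algebra. -/
def A : Racah F := RingQuot.mkAlgHom F (racahRel F) (fA F)
/-- Generator `B` of the Racah algebra. -/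
def B : Racah F := RingQuot.mkAlgHom F (racahRel F) (fB F)
/-- Generator `C` of the Racah algebra. -/
def C : Racah F := RingQuot.mkAlgHom F (racahRel F) (fC F)
/-- Generator `D` of the Racah algebra. -/
def D : Racah F := RingQuot.mkAlgHom F (racahRel F) (fD F)

/-- `α = [A,D] + AC - BA` in the Racah algebra. -/
def alpha : Racah F := (A F * D F - D F * A F) + A F * C F - B F * A F
/-- `β = [B,D] + BA - CB` in the Racah algebra. -/
def beta : Racah F := (B F * D F - D F * B F) + B F * A F - C F * B F
/-- `γ = [C,D] + CB - AC` in the Racah algebra. -/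
def gamma : Racah F := (C F * D F - D F * C F) + C F * B F - A F * C F
/-- `δ = A + B + C` in the Racah algebra. -/
def delta : Racah F := A F + B F + C F

/-- `Ω_A = D² + (BAC + CAB)/2 + A² + Bγ - Cβ - Aδ`. -/
def OmegaA : Racah F :=
  D F ^ 2 + (2 : F)⁻¹ • (B F * A F * C F + C F * A F * B F) + A F ^ 2
    + B F * gamma F - C F * beta F - A F * delta F

/-- `Ω_B = D² + (CBA + ABC)/2 + B² + Cα - Aγ - Bδ`. -/
def OmegaB : Racah F :=
  D F ^ 2 + (2 : F)⁻¹ • (C F * B F * A F + A F * B F * C F) + B F ^ 2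
    + C F * alpha F - A F * gamma F - B F * delta F

/-- `Ω_C = D² + (ACB + BCA)/2 + C² + Aβ - Bα - Cδ`. -/
def OmegaC : Racah F :=
  D F ^ 2 + (2 : F)⁻¹ • (A F * C F * B F + B F * C F * A F) + C F ^ 2
    + A F * beta F - B F * alpha F - C F * delta F

-- the tensor algebra F[a,b,c] ⊗ U(sl2)
/-- The polynomial algebra `F[a,b,c]`. -/
abbrev P := MvPolynomial (Fin 3) F

/-- The tensor product algebra `F[a,b,c] ⊗ U(sl₂)`. -/
abbrev T := P F ⊗[F] U F

/-- The indeterminate `a`. -/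
def pa : P F := MvPolynomial.X 0
/-- The indeterminate `b`. -/
def pb : P F := MvPolynomial.X 1
/-- The indeterminate `c`. -/
def pc : P F := MvPolynomial.X 2

/-- `A♮`. -/
def Anat : T F :=
  (pa F * (pa F + 1)) ⊗ₜ[F] (1 : U F) + (pb F - pc F - pa F) ⊗ₜ[F] ux F
    + (pa F + pb F - pc F + 1) ⊗ₜ[F] uy F - (1 : P F) ⊗ₜ[F] (ux F * uy F)

/-- `B♮`. -/
def Bnat : T F :=
  (pb F * (pb F + 1)) ⊗ₜ[F] (1 : U F) + (pc F - pa F - pb F) ⊗ₜ[F] uy F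
    + (pb F + pc F - pa F + 1) ⊗ₜ[F] uz F - (1 : P F) ⊗ₜ[F] (uy F * uz F)

/-- `C♮`. -/
def Cnat : T F :=
  (pc F * (pc F + 1)) ⊗ₜ[F] (1 : U F) + (pa F - pb F - pc F) ⊗ₜ[F] uz F
    + (pc F + pa F - pb F + 1) ⊗ₜ[F] ux F - (1 : P F) ⊗ₜ[F] (uz F * ux F)

/-- `D♮`. -/
def Dnat : T F :=
  (1 : P F) ⊗ₜ[F] (uz F * uy F * ux F + uz F * ux F)
    + (pc F + pb F * (pc F + pa F - pb F)) ⊗ₜ[F] ux F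
    + (pa F + pc F * (pa F + pb F - pc F)) ⊗ₜ[F] uy F
    + (pb F + pa F * (pb F + pc F - pa F)) ⊗ₜ[F] uz F
    + (pb F - pc F) ⊗ₜ[F] (ux F * uy F)
    + (pc F - pa F) ⊗ₜ[F] (uy F * uz F)
    + (pa F - pb F) ⊗ₜ[F] (uz F * ux F)

/-- `R = 2 ⊗ yν_x + 2(c+a-b+1) ⊗ ν_x`. -/
def Rel : T F :=
  (2 : P F) ⊗ₜ[F] (uy F * nux F) + (2 * (pc F + pa F - pb F + 1)) ⊗ₜ[F] nux F

/-- `L = -2 ⊗ yν_z - 2(a-b-c-1) ⊗ ν_z`. -/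
def Lel : T F :=
  -((2 : P F) ⊗ₜ[F] (uy F * nuz F)) - (2 * (pa F - pb F - pc F - 1)) ⊗ₜ[F] nuz F

/-- `θ = 1⊗y - b⊗1`. -/
def theta : T F := (1 : P F) ⊗ₜ[F] uy F - pb F ⊗ₜ[F] (1 : U F)

/-- `ϑ = 1⊗y + a⊗1`. -/
def vartheta : T F := (1 : P F) ⊗ₜ[F] uy F + pa F ⊗ₜ[F] (1 : U F)

/-- `F[a,b,c] ⊗ U_n` as a subspace of `F[a,b,c] ⊗ U(sl₂)`. -/
def TU (n : ℤ) : Submodule F (T F) :=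
  Submodule.span F {t : T F | ∃ (p : P F) (u : U F), u ∈ Usub F n ∧ t = p ⊗ₜ[F] u}

/-!
In the Racah algebra the commutators of `A, B, D, α, β, δ` have lower weight than the products they
come from, so the ordered monomials in these elements span. On the other hand, for scalars `t, a, d`
in a domain `R`, the algebra acts on two-sided sequences of polynomials in `w` and `y` over `R`,
with `A` and `B` bidiagonal and with `α, β, δ` acting as scalars.

Order the exponents `(power of w, position, power of y)` lexicographically. Then `A, B, D, α, β, δ`
have leading symbols `1, 2, -1, a, -2t, 2d`, and symbols multiply. The degree of an ordered monomial
determines its exponents of `A` and `B`, and its exponent of `D` once that of `β` is known, so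
ordered monomials of the same degree have as symbols nonzero multiples of distinct monomials in
`t, a, d`. If `t, a, d` are algebraically independent, then every nonzero element of the algebra
has a nonzero symbol, and the product of two nonzero symbols is nonzero.
-/

section AlmostCommuting

variable {k ι 𝓐 : Type*} [CommSemiring k] [Ring 𝓐] [Algebra k 𝓐]

variable (k) in
/-- The span of the words `x i₁ ⋯ x iᵣ` of total weight `wt i₁ + ⋯ + wt iᵣ < n`: the filtration
along which words are sorted into ordered monomials. -/
def wordSpan (x : ι → 𝓐) (wt : ι → ℕ) (n : ℕ) : Submodule k 𝓐 :=
  Submodule.span k ((fun l : List ι => (l.map x).prod) '' {l | (l.map wt).sum < n})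

variable {x : ι → 𝓐} {wt : ι → ℕ}

theorem prod_mem_wordSpan {l : List ι} {n : ℕ} (hl : (l.map wt).sum < n) :
    (l.map x).prod ∈ wordSpan k x wt n :=
  Submodule.subset_span ⟨l, hl, rfl⟩

theorem mul_mem_wordSpan {n : ℕ} {u : 𝓐} (i : ι) (hu : u ∈ wordSpan k x wt n) :
    x i * u ∈ wordSpan k x wt (wt i + n) := by
  suffices wordSpan k x wt n ≤ (wordSpan k x wt (wt i + n)).comap (LinearMap.mulLeft k (x i)) from
    this hu
  rw [wordSpan, Submodule.span_le]
  rintro _ ⟨l, hl, rfl⟩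
  have := prod_mem_wordSpan (k := k) (x := x) (wt := wt) (l := i :: l) (n := wt i + n)
    (by simpa using hl)
  simpa using this

theorem mem_wordSpan_mul_prod {n : ℕ} {u : 𝓐} (l : List ι) (hu : u ∈ wordSpan k x wt n) :
    u * (l.map x).prod ∈ wordSpan k x wt (n + (l.map wt).sum) := by
  suffices wordSpan k x wt n ≤
      (wordSpan k x wt (n + (l.map wt).sum)).comap (LinearMap.mulRight k (l.map x).prod) from
    this hu
  rw [wordSpan, Submodule.span_le]
  rintro _ ⟨l', hl', rfl⟩
  have := prod_mem_wordSpan (k := k) (x := x) (wt := wt) (l := l' ++ l)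
    (n := n + (l.map wt).sum) (by simpa using hl')
  simpa using this

theorem prod_sub_prod_mem_wordSpan_of_perm
    (hcomm : ∀ i j, x i * x j - x j * x i ∈ wordSpan k x wt (wt i + wt j))
    {l l' : List ι} (h : l.Perm l') :
    (l.map x).prod - (l'.map x).prod ∈ wordSpan k x wt (l.map wt).sum := by
  induction h with
  | nil => simp
  | cons i _ ih => simpa [mul_sub] using mul_mem_wordSpan i ih
  | swap i j l =>
    simpa [sub_mul, mul_assoc, add_assoc] using mem_wordSpan_mul_prod l (hcomm j i)
  | trans h₁ _ ih₁ ih₂ =>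
    rw [← (h₁.map wt).sum_eq] at ih₂
    simpa using add_mem ih₁ ih₂

theorem wordSpan_le_span_multiset
    (hcomm : ∀ i j, x i * x j - x j * x i ∈ wordSpan k x wt (wt i + wt j)) (n : ℕ) :
    wordSpan k x wt n ≤
      Submodule.span k (Set.range fun m : Multiset ι => (m.toList.map x).prod) := by
  induction n with
  | zero => simp [wordSpan]
  | succ n ih =>
    rw [wordSpan, Submodule.span_le]
    rintro _ ⟨l, hl, rfl⟩
    have hsort : (l.map x).prod - ((l : Multiset ι).toList.map x).prod ∈
        wordSpan k x wt (l.map wt).sum :=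
      prod_sub_prod_mem_wordSpan_of_perm hcomm (Multiset.coe_eq_coe.1 (Multiset.coe_toList _).symm)
    have hle : wordSpan k x wt (l.map wt).sum ≤ wordSpan k x wt n :=
      Submodule.span_mono <| Set.image_mono fun _ hl' => hl'.trans_le (Nat.lt_succ_iff.1 hl)
    simpa using add_mem (ih (hle hsort)) (Submodule.subset_span ⟨(l : Multiset ι), rfl⟩)

theorem span_multiset_prod_eq_top
    (hcomm : ∀ i j, x i * x j - x j * x i ∈ wordSpan k x wt (wt i + wt j))
    (hgen : Algebra.adjoin k (Set.range x) = ⊤) :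
    Submodule.span k (Set.range fun m : Multiset ι => (m.toList.map x).prod) = ⊤ := by
  rw [eq_top_iff, ← Algebra.top_toSubmodule, ← hgen, Algebra.adjoin_eq_span, Submodule.span_le]
  intro u hu
  rw [← FreeMonoid.mrange_lift] at hu
  obtain ⟨l, rfl⟩ := hu
  rw [FreeMonoid.lift_apply]
  exact wordSpan_le_span_multiset hcomm _ (prod_mem_wordSpan (Nat.lt_succ_self _))

end AlmostCommuting

section Symbols

variable {k Γ R V E : Type*} [CommRing k] [AddCommMonoid Γ] [LinearOrder Γ] [CommRing R]
  [Algebra k R] [AddCommGroup V] [Module k V] [Ring E] [Module E V]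

/-- `v` has order at most `g`: its coefficients, as read off by `c`, vanish beyond `g`. -/
def OrderLE (c : V →ₗ[k] Γ → R) (g : Γ) (v : V) : Prop :=
  ∀ g', g < g' → c v g' = 0

/-- `T` has symbol `q` in degree `g`: it raises orders by at most `g` and multiplies leading
coefficients by `q`. The value `q = 0` is allowed, and means that `T` is of lower order. -/
def HasSymbol (c : V →ₗ[k] Γ → R) (T : E) (g : Γ) (q : R) : Prop :=
  ∀ g' v, OrderLE c g' v → OrderLE c (g + g') (T • v) ∧ c (T • v) (g + g') = q * c v g'

variable {c : V →ₗ[k] Γ → R}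

namespace HasSymbol

theorem one : HasSymbol c (1 : E) 0 1 := fun g v hv => by simpa using hv

theorem zero (g : Γ) : HasSymbol c (0 : E) g 0 := fun _ v _ => by simp [OrderLE]

theorem mul {T T' : E} {g g' : Γ} {q q' : R} (h : HasSymbol c T g q) (h' : HasSymbol c T' g' q') :
    HasSymbol c (T * T') (g + g') (q * q') := by
  intro g₀ v hv
  obtain ⟨horder', hlead'⟩ := h' g₀ v hv
  obtain ⟨horder, hlead⟩ := h _ _ horder'
  rw [mul_smul, add_assoc, hlead, hlead', mul_assoc]
  exact ⟨horder, rfl⟩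

theorem add {T T' : E} {g : Γ} {q q' : R} (h : HasSymbol c T g q) (h' : HasSymbol c T' g q') :
    HasSymbol c (T + T') g (q + q') := by
  intro g₀ v hv
  obtain ⟨horder, hlead⟩ := h g₀ v hv
  obtain ⟨horder', hlead'⟩ := h' g₀ v hv
  refine ⟨fun x hx => ?_, ?_⟩
  · simp [add_smul, horder x hx, horder' x hx]
  · simp [add_smul, hlead, hlead', add_mul]

theorem neg {T : E} {g : Γ} {q : R} (h : HasSymbol c T g q) : HasSymbol c (-T) g (-q) := by
  intro g₀ v hv
  obtain ⟨horder, hlead⟩ := h g₀ v hv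
  exact ⟨fun x hx => by simp [horder x hx], by simp [hlead]⟩

theorem sum {ι : Type*} {s : Finset ι} {T : ι → E} {g : Γ} {q : ι → R}
    (h : ∀ i ∈ s, HasSymbol c (T i) g (q i)) : HasSymbol c (∑ i ∈ s, T i) g (∑ i ∈ s, q i) := by
  classical
  induction s using Finset.induction_on with
  | empty => simpa using zero g
  | insert i s hi ih =>
    rw [Finset.sum_insert hi, Finset.sum_insert hi]
    exact (h i (Finset.mem_insert_self i s)).add
      (ih fun j hj => h j (Finset.mem_insert_of_mem hj))

theorem list_prod {ι : Type*} {T : ι → E} {g : ι → Γ} {q : ι → R}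
    (h : ∀ i, HasSymbol c (T i) (g i) (q i)) (l : List ι) :
    HasSymbol c (l.map T).prod (l.map g).sum (l.map q).prod := by
  induction l with
  | nil => simpa using one
  | cons i l ih => simpa using (h i).mul ih

theorem of_lt [IsOrderedCancelAddMonoid Γ] {T : E} {g g' : Γ} {q : R} (h : HasSymbol c T g q)
    (hlt : g < g') : HasSymbol c T g' 0 := by
  intro g₀ v hv
  obtain ⟨horder, -⟩ := h g₀ v hv
  have hlt' : g + g₀ < g' + g₀ := add_lt_add_left hlt g₀
  exact ⟨fun x hx => horder x (hlt'.trans hx), by rw [horder _ hlt', zero_mul]⟩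

theorem smul [Algebra k E] [IsScalarTower k E V] {T : E} {g : Γ} {q : R} (r : k)
    (h : HasSymbol c T g q) : HasSymbol c (r • T) g (r • q) := by
  intro g₀ v hv
  obtain ⟨horder, hlead⟩ := h g₀ v hv
  exact ⟨fun x hx => by simp [smul_assoc, horder x hx], by simp [smul_assoc, hlead]⟩

end HasSymbol

variable [IsOrderedCancelAddMonoid Γ] [Algebra k E] [IsScalarTower k E V] {ι 𝓐 : Type*}
  [Ring 𝓐] [Algebra k 𝓐] {ρ : 𝓐 →ₐ[k] E} {x : ι → 𝓐} {deg : ι → Γ} {q : ι → R}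

theorem exists_hasSymbol_ne_zero (hspan : Submodule.span k (Set.range x) = ⊤)
    (hsymbol : ∀ i, HasSymbol c (ρ (x i)) (deg i) (q i))
    (hindep : ∀ g, LinearIndepOn k q {i | deg i = g}) {u : 𝓐} (hu : u ≠ 0) :
    ∃ g Q, Q ≠ 0 ∧ HasSymbol c (ρ u) g Q := by
  obtain ⟨a, rfl⟩ := Finsupp.mem_span_range_iff_exists_finsupp.1 (hspan ▸ Submodule.mem_top : u ∈ _)
  have ha : a.support.Nonempty := by
    rw [Finsupp.support_nonempty_iff]
    rintro rfl
    simp at hu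
  obtain ⟨i₀, hi₀, hmax⟩ := a.support.exists_max_image deg ha
  refine ⟨deg i₀, ∑ i ∈ a.support with deg i = deg i₀, a i • q i, fun hzero => ?_, ?_⟩
  · refine Finsupp.mem_support_iff.1 hi₀ ?_
    exact linearIndepOn_iff'.1 (hindep (deg i₀)) _ a (fun i hi => (Finset.mem_filter.1 hi).2) hzero
      i₀ (Finset.mem_filter.2 ⟨hi₀, rfl⟩)
  · simp only [Finsupp.sum, map_sum, map_smul, Finset.sum_filter]
    refine HasSymbol.sum fun i hi => ?_
    split_ifs with hdeg
    · exact hdeg ▸ (hsymbol i).smul (a i)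
    · exact ((hsymbol i).smul (a i)).of_lt ((hmax i hi).lt_of_ne hdeg)

theorem noZeroDivisors_of_hasSymbol [NoZeroDivisors R]
    (hspan : Submodule.span k (Set.range x) = ⊤)
    (hsymbol : ∀ i, HasSymbol c (ρ (x i)) (deg i) (q i))
    (hindep : ∀ g, LinearIndepOn k q {i | deg i = g})
    {g₀ : Γ} {v₀ : V} (hv₀ : OrderLE c g₀ v₀) (hlead : c v₀ g₀ ≠ 0) : NoZeroDivisors 𝓐 where
  eq_zero_or_eq_zero_of_mul_eq_zero {u v} huv := by
    by_contra! hne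
    obtain ⟨g, Q, hQ, hu⟩ := exists_hasSymbol_ne_zero hspan hsymbol hindep hne.1
    obtain ⟨g', Q', hQ', hv⟩ := exists_hasSymbol_ne_zero hspan hsymbol hindep hne.2
    have hprod : Q * Q' * c v₀ g₀ = 0 := by
      rw [← ((hu.mul hv) g₀ v₀ hv₀).2, ← map_mul, huv]
      simp
    exact mul_ne_zero (mul_ne_zero hQ hQ') hlead hprod

end Symbols

section Monomials

theorem linearIndepOn_aeval_monomial {σ ι k R : Type*} [Field k] [CommRing R] [Algebra k R]
    {x : σ → R} (hx : AlgebraicIndependent k x) {s : Set ι} {e : ι → σ →₀ ℕ} (he : s.InjOn e)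
    {c : ι → k} (hc : ∀ i, c i ≠ 0) :
    LinearIndepOn k (fun i => MvPolynomial.aeval x (MvPolynomial.monomial (e i) (c i))) s := by
  have hmonomial := ((MvPolynomial.basisMonomials σ k).linearIndependent.comp _ he.injective).map'
    (MvPolynomial.aeval x).toLinearMap (LinearMap.ker_eq_bot.2 hx)
  have hscaled : (fun i : s => MvPolynomial.aeval x (MvPolynomial.monomial (e i) (c i))) =
      (fun i : s => Units.mk0 (c i) (hc i)) •
        fun i : s => MvPolynomial.aeval x (MvPolynomial.basisMonomials σ k (e i)) := by
    funext i
    simp [MvPolynomial.aeval_monomial, Units.smul_def, Algebra.smul_def]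
  rw [LinearIndepOn, hscaled]
  exact hmonomial.units_smul _

theorem monomial_list_sum {σ ι k : Type*} [CommSemiring k] (e : ι → σ →₀ ℕ) (c : ι → k)
    (l : List ι) : MvPolynomial.monomial (l.map e).sum (l.map c).prod =
      (l.map fun i => MvPolynomial.monomial (e i) (c i)).prod := by
  induction l with
  | nil => simp
  | cons i l ih => simp [← ih, MvPolynomial.monomial_mul]

end Monomials

section Presentation

theorem adjoin_generators_eq_top :
    Algebra.adjoin F (Set.range fun i =>
      RingQuot.mkAlgHom F (racahRel F) (FreeAlgebra.ι F i)) = ⊤ := by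
  have hmap := congrArg (Subalgebra.map (RingQuot.mkAlgHom F (racahRel F)))
    (FreeAlgebra.adjoin_range_ι F (Fin 4))
  rwa [AlgHom.map_adjoin, ← Set.range_comp, Algebra.map_top,
    (AlgHom.range_eq_top _).2 (RingQuot.mkAlgHom_surjective F _)] at hmap

theorem commute_of_commute_generators {z : Racah F}
    (hz : ∀ i, Commute z (RingQuot.mkAlgHom F (racahRel F) (FreeAlgebra.ι F i))) (u : Racah F) :
    Commute z u :=
  Algebra.commute_of_mem_adjoin_of_forall_mem_commute
    (adjoin_generators_eq_top F ▸ Algebra.mem_top : u ∈ _) (by rintro _ ⟨i, rfl⟩; exact hz i)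

theorem commutator_A_B : A F * B F - B F * A F = 2 * D F := by
  simpa only [A, B, D, map_sub, map_mul, map_ofNat] using
    RingQuot.mkAlgHom_rel F (racahRel.AB (F := F))

theorem commutator_B_C : B F * C F - C F * B F = 2 * D F := by
  simpa only [B, C, D, map_sub, map_mul, map_ofNat] using
    RingQuot.mkAlgHom_rel F (racahRel.BC (F := F))

theorem commutator_C_A : C F * A F - A F * C F = 2 * D F := by
  simpa only [C, A, D, map_sub, map_mul, map_ofNat] using
    RingQuot.mkAlgHom_rel F (racahRel.CA (F := F))

theorem commute_alpha (u : Racah F) : Commute (alpha F) u :=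
  commute_of_commute_generators F (fun i => by
    simpa only [commute_iff_eq, alpha, A, B, C, D, falpha, map_mul, map_sub, map_add] using
      RingQuot.mkAlgHom_rel F (racahRel.calpha (F := F) i)) u

theorem commute_beta (u : Racah F) : Commute (beta F) u :=
  commute_of_commute_generators F (fun i => by
    simpa only [commute_iff_eq, beta, A, B, C, D, fbeta, map_mul, map_sub, map_add] using
      RingQuot.mkAlgHom_rel F (racahRel.cbeta (F := F) i)) u

theorem commute_delta (hchar : (2 : F) ≠ 0) (u : Racah F) : Commute (delta F) u := by
  have hA : Commute (delta F) (A F) := by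
    rw [commute_iff_eq, delta]
    linear_combination (norm := noncomm_ring) commutator_C_A F - commutator_A_B F
  have hB : Commute (delta F) (B F) := by
    rw [commute_iff_eq, delta]
    linear_combination (norm := noncomm_ring) commutator_A_B F - commutator_B_C F
  have hC : Commute (delta F) (C F) := by
    rw [show C F = delta F - A F - B F by rw [delta]; abel]
    exact ((Commute.refl _).sub_right hA).sub_right hB
  have hD : Commute (delta F) (D F) := by
    have htwo : D F = (2 : F)⁻¹ • (A F * B F - B F * A F) := by
      rw [commutator_A_B, two_mul, ← two_smul F (D F), inv_smul_smul₀ hchar]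
    rw [htwo]
    exact ((hA.mul_right hB).sub_right (hB.mul_right hA)).smul_right _
  refine commute_of_commute_generators F (fun i => ?_) u
  fin_cases i
  exacts [hA, hB, hC, hD]

section Lift

variable {E : Type*} [Ring E] [Algebra F E] {a b d s : E}

/-- The homomorphism from the Racah algebra to `E` with `A ↦ a`, `B ↦ b`, `D ↦ d` and `δ ↦ s`,
hence `C ↦ s - a - b`. The image of `γ` is central because `α + β + γ = [δ, D] = 0`. -/
def racahLift (hs : ∀ u, Commute s u) (hab : a * b - b * a = 2 * d)
    (hα : ∀ u, Commute (a * d - d * a + a * (s - a - b) - b * a) u)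
    (hβ : ∀ u, Commute (b * d - d * b + b * a - (s - a - b) * b) u) : Racah F →ₐ[F] E :=
  RingQuot.liftAlgHom F ⟨FreeAlgebra.lift F ![a, b, s - a - b, d], by
    have hγ : (s - a - b) * d - d * (s - a - b) + (s - a - b) * b - a * (s - a - b)
        = -(a * d - d * a + a * (s - a - b) - b * a)
          - (b * d - d * b + b * a - (s - a - b) * b) := by
      linear_combination (norm := noncomm_ring) (hs d).eq
    rintro _ _ (_ | _ | _ | i | i | i)
    · simpa [fA, fB, fD, map_ofNat] using hab
    · simp only [fB, fC, fD, map_sub, map_mul, map_ofNat, FreeAlgebra.lift_ι_apply]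
      dsimp
      linear_combination (norm := noncomm_ring) hab - (hs b).eq
    · simp only [fA, fC, fD, map_sub, map_mul, map_ofNat, FreeAlgebra.lift_ι_apply]
      dsimp
      linear_combination (norm := noncomm_ring) hab + (hs a).eq
    · simpa [fA, fB, fC, fD, falpha] using (hα _).eq
    · simpa [fA, fB, fC, fD, fbeta] using (hβ _).eq
    · have := (hα (![a, b, s - a - b, d] i)).neg_left.sub_left (hβ _)
      rw [← hγ] at this
      simpa [fA, fB, fC, fD, fgamma] using this.eq⟩

variable (hs : ∀ u, Commute s u) (hab : a * b - b * a = 2 * d)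
  (hα : ∀ u, Commute (a * d - d * a + a * (s - a - b) - b * a) u)
  (hβ : ∀ u, Commute (b * d - d * b + b * a - (s - a - b) * b) u)

theorem racahLift_A : racahLift F hs hab hα hβ (A F) = a := by simp [racahLift, A, fA]

theorem racahLift_B : racahLift F hs hab hα hβ (B F) = b := by simp [racahLift, B, fB]

theorem racahLift_C : racahLift F hs hab hα hβ (C F) = s - a - b := by simp [racahLift, C, fC]

theorem racahLift_D : racahLift F hs hab hα hβ (D F) = d := by simp [racahLift, D, fD]

theorem racahLift_alpha : racahLift F hs hab hα hβ (alpha F) =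
    a * d - d * a + a * (s - a - b) - b * a := by
  simp only [alpha, map_add, map_sub, map_mul, racahLift_A, racahLift_B, racahLift_C, racahLift_D]

theorem racahLift_beta : racahLift F hs hab hα hβ (beta F) =
    b * d - d * b + b * a - (s - a - b) * b := by
  simp only [beta, map_add, map_sub, map_mul, racahLift_A, racahLift_B, racahLift_C, racahLift_D]

theorem racahLift_delta : racahLift F hs hab hα hβ (delta F) = s := by
  simp only [delta, map_add, racahLift_A, racahLift_B, racahLift_C]
  abel

end Lift

end Presentation

section PBW

/-- The generators `A, B, D, α, β, δ` whose ordered monomials span the Racah algebra. -/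
def pbwGen : Fin 6 → Racah F := ![A F, B F, D F, alpha F, beta F, delta F]

/-- The weights of `A, B, D, α, β, δ`, for which all their commutators drop in weight. -/
def pbwWeight : Fin 6 → ℕ := ![2, 2, 3, 4, 4, 2]

theorem adjoin_pbwGen_eq_top : Algebra.adjoin F (Set.range (pbwGen F)) = ⊤ := by
  have hmem (i) : pbwGen F i ∈ Algebra.adjoin F (Set.range (pbwGen F)) :=
    Algebra.subset_adjoin ⟨i, rfl⟩
  rw [eq_top_iff, ← adjoin_generators_eq_top, Algebra.adjoin_le_iff]
  rintro _ ⟨i, rfl⟩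
  fin_cases i
  · exact hmem 0
  · exact hmem 1
  · have hC : C F = pbwGen F 5 - pbwGen F 0 - pbwGen F 1 := by
      change C F = delta F - A F - B F
      rw [delta]
      abel
    change C F ∈ _
    rw [hC]
    exact sub_mem (sub_mem (hmem 5) (hmem 0)) (hmem 1)
  · exact hmem 2

theorem pbwGen_mem_wordSpan {i : Fin 6} {n : ℕ} (h : pbwWeight i < n) :
    pbwGen F i ∈ wordSpan F (pbwGen F) pbwWeight n := by
  simpa using prod_mem_wordSpan (k := F) (x := pbwGen F) (l := [i]) (by simpa using h)

theorem pbwGen_mul_mem_wordSpan {i j : Fin 6} {n : ℕ} (h : pbwWeight i + pbwWeight j < n) :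
    pbwGen F i * pbwGen F j ∈ wordSpan F (pbwGen F) pbwWeight n := by
  simpa using prod_mem_wordSpan (k := F) (x := pbwGen F) (l := [i, j]) (by simpa using h)

theorem commutator_A_B_mem_wordSpan :
    A F * B F - B F * A F ∈ wordSpan F (pbwGen F) pbwWeight 4 := by
  have hD : D F ∈ wordSpan F (pbwGen F) pbwWeight 4 := pbwGen_mem_wordSpan F (i := 2) (by decide)
  rw [commutator_A_B, two_mul]
  exact add_mem hD hD

theorem commutator_A_D_mem_wordSpan :
    A F * D F - D F * A F ∈ wordSpan F (pbwGen F) pbwWeight 5 := by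
  have hexpand : A F * D F - D F * A F =
      alpha F - A F * delta F + A F * A F + A F * B F + B F * A F := by
    rw [alpha, delta]
    noncomm_ring
  rw [hexpand]
  refine add_mem (add_mem (add_mem (sub_mem ?_ ?_) ?_) ?_) ?_
  · exact pbwGen_mem_wordSpan F (i := 3) (by decide)
  · exact pbwGen_mul_mem_wordSpan F (i := 0) (j := 5) (by decide)
  · exact pbwGen_mul_mem_wordSpan F (i := 0) (j := 0) (by decide)
  · exact pbwGen_mul_mem_wordSpan F (i := 0) (j := 1) (by decide)
  · exact pbwGen_mul_mem_wordSpan F (i := 1) (j := 0) (by decide)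

theorem commutator_B_D_mem_wordSpan :
    B F * D F - D F * B F ∈ wordSpan F (pbwGen F) pbwWeight 5 := by
  have hexpand : B F * D F - D F * B F =
      beta F + delta F * B F - B F * B F - A F * B F - B F * A F := by
    rw [beta, delta]
    noncomm_ring
  rw [hexpand]
  refine sub_mem (sub_mem (sub_mem (add_mem ?_ ?_) ?_) ?_) ?_
  · exact pbwGen_mem_wordSpan F (i := 4) (by decide)
  · exact pbwGen_mul_mem_wordSpan F (i := 5) (j := 1) (by decide)
  · exact pbwGen_mul_mem_wordSpan F (i := 1) (j := 1) (by decide)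
  · exact pbwGen_mul_mem_wordSpan F (i := 0) (j := 1) (by decide)
  · exact pbwGen_mul_mem_wordSpan F (i := 1) (j := 0) (by decide)

theorem pbwGen_commutator_mem_wordSpan (hchar : (2 : F) ≠ 0) (i j : Fin 6) :
    pbwGen F i * pbwGen F j - pbwGen F j * pbwGen F i ∈
      wordSpan F (pbwGen F) pbwWeight (pbwWeight i + pbwWeight j) := by
  wlog hij : i ≤ j generalizing i j
  · rw [← neg_sub, add_comm]
    exact neg_mem (this j i (le_of_not_ge hij))
  have hcomm {u v : Racah F} (huv : Commute u v) (n : ℕ) :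
      u * v - v * u ∈ wordSpan F (pbwGen F) pbwWeight n := by
    rw [huv.eq, sub_self]
    exact zero_mem _
  have hcases : ∀ i j : Fin 6, i ≤ j → i = j ∨ (i = 0 ∧ j = 1) ∨ (i = 0 ∧ j = 2) ∨
      (i = 1 ∧ j = 2) ∨ j = 3 ∨ j = 4 ∨ j = 5 := by decide
  rcases hcases i j hij with
    rfl | ⟨rfl, rfl⟩ | ⟨rfl, rfl⟩ | ⟨rfl, rfl⟩ | rfl | rfl | rfl
  · exact hcomm (Commute.refl _) _
  · exact commutator_A_B_mem_wordSpan F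
  · exact commutator_A_D_mem_wordSpan F
  · exact commutator_B_D_mem_wordSpan F
  · exact hcomm (commute_alpha F _).symm _
  · exact hcomm (commute_beta F _).symm _
  · exact hcomm (commute_delta F hchar _).symm _

/-- The monomial in `A, B, D, α, β, δ` with the factors listed in `m`, in a chosen order. -/
def pbwMonomial (m : Multiset (Fin 6)) : Racah F := (m.toList.map (pbwGen F)).prod

theorem span_pbwMonomial_eq_top (hchar : (2 : F) ≠ 0) :
    Submodule.span F (Set.range (pbwMonomial F)) = ⊤ :=
  span_multiset_prod_eq_top (pbwGen_commutator_mem_wordSpan F hchar) (adjoin_pbwGen_eq_top F)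

end PBW

section Representation

section WeightedShift

variable {K : Type*} [CommRing K]

/-- The operator on two-sided sequences sending `v` to `n ↦ f n * v (n - j)`. -/
def weightedShift (j : ℤ) (f : ℤ → K) : Module.End K (ℤ → K) where
  toFun v n := f n * v (n - j)
  map_add' v v' := by
    ext n
    simp only [Pi.add_apply, mul_add]
  map_smul' r v := by
    ext n
    simp only [Pi.smul_apply, smul_eq_mul, RingHom.id_apply, mul_left_comm]

@[simp]
theorem weightedShift_apply (j : ℤ) (f v : ℤ → K) (n : ℤ) :
    weightedShift j f v n = f n * v (n - j) := rfl

theorem algebraMap_eq_weightedShift (p : K) :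
    algebraMap K (Module.End K (ℤ → K)) p = weightedShift 0 fun _ => p := by
  ext v n
  simp [Module.algebraMap_end_apply]

end WeightedShift

section Operators

variable {K : Type*} [CommRing K] (t w a d y : K)

/-- The weight of the lowering part of `opB`. -/
def phi (x : K) : K := x ^ 4 + 2 * t * x ^ 3 + (2 * t ^ 2 - 2 * d - 1) * x ^ 2 + 2 * w * x - a

/-- The weight of the diagonal part of `-opD`. -/
def psi (x : K) : K :=
  2 * x ^ 3 + 3 * x ^ 2 + x + t * (3 * x ^ 2 + 3 * x + 1) + (t ^ 2 - d) * (2 * x + 1) + w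

/-- The action of `A`: with `x = y + n` at the `n`-th place, its diagonal part is `x (x + 1)`. -/
def opA : Module.End K (ℤ → K) :=
  weightedShift 0 (fun n => (y + n) * (y + n + 1)) + weightedShift 1 1

/-- The action of `B`. The diagonal parts of `A` and `B` are the eigenvalue sequences of a Leonard
pair of Racah type, and the quartic `phi` is chosen so that `α` and `β` act as scalars. -/
def opB : Module.End K (ℤ → K) :=
  weightedShift 0 (fun n => (y + n + t) * (y + n + t + 1)) +
    weightedShift (-1) (fun n => phi t w a d (y + n + 1))

/-- The action of `D`, namely half the commutator of `opA` and `opB`. -/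
def opD : Module.End K (ℤ → K) :=
  -(weightedShift 1 (fun n => y + n + t) + weightedShift 0 (fun n => psi t w d (y + n)) +
    weightedShift (-1) (fun n => (y + n + 1) * phi t w a d (y + n + 1)))

theorem opA_apply (v : ℤ → K) (n : ℤ) :
    opA y v n = (y + n) * (y + n + 1) * v n + v (n - 1) := by
  simp [opA]

theorem opB_apply (v : ℤ → K) (n : ℤ) :
    opB t w a d y v n =
      (y + n + t) * (y + n + t + 1) * v n + phi t w a d (y + n + 1) * v (n + 1) := by
  simp [opB]

theorem opD_apply (v : ℤ → K) (n : ℤ) :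
    opD t w a d y v n = -((y + n + t) * v (n - 1) + psi t w d (y + n) * v n +
      (y + n + 1) * phi t w a d (y + n + 1) * v (n + 1)) := by
  simp [opD]

theorem commutator_opA_opB :
    opA y * opB t w a d y - opB t w a d y * opA y = 2 * opD t w a d y := by
  ext1 v
  funext n
  simp only [two_mul, LinearMap.sub_apply, LinearMap.add_apply, Module.End.mul_apply, Pi.sub_apply,
    Pi.add_apply, opA_apply, opB_apply, opD_apply, phi, psi, sub_add_cancel, add_sub_cancel_right]
  push_cast
  ring

theorem opA_opD_relation :
    opA y * opD t w a d y - opD t w a d y * opA y +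
      opA y * (algebraMap K _ (2 * d) - opA y - opB t w a d y) - opB t w a d y * opA y =
    algebraMap K _ a := by
  ext1 v
  funext n
  simp only [LinearMap.sub_apply, LinearMap.add_apply, Module.End.mul_apply, Pi.sub_apply,
    Pi.add_apply, opA_apply, opB_apply, opD_apply, phi, psi, sub_add_cancel, add_sub_cancel_right,
    Module.algebraMap_end_apply, Pi.smul_apply, smul_eq_mul]
  push_cast
  ring

theorem opB_opD_relation :
    opB t w a d y * opD t w a d y - opD t w a d y * opB t w a d y + opB t w a d y * opA y -
      (algebraMap K _ (2 * d) - opA y - opB t w a d y) * opB t w a d y =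
    algebraMap K _ (phi t w a d (-t)) := by
  ext1 v
  funext n
  simp only [LinearMap.sub_apply, LinearMap.add_apply, Module.End.mul_apply, Pi.sub_apply,
    Pi.add_apply, opA_apply, opB_apply, opD_apply, phi, psi, sub_add_cancel, add_sub_cancel_right,
    Module.algebraMap_end_apply, Pi.smul_apply, smul_eq_mul]
  push_cast
  ring

variable [Algebra F K]

/-- The action of the Racah algebra on sequences by `opA`, `opB` and `opD`. -/
def racahRep : Racah F →ₐ[F] Module.End K (ℤ → K) :=
  racahLift F (Algebra.commutes (2 * d)) (commutator_opA_opB t w a d y)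
    (opA_opD_relation t w a d y ▸ Algebra.commutes a)
    (opB_opD_relation t w a d y ▸ Algebra.commutes (phi t w a d (-t)))

theorem racahRep_A : racahRep F t w a d y (A F) = opA y := racahLift_A ..

theorem racahRep_B : racahRep F t w a d y (B F) = opB t w a d y := racahLift_B ..

theorem racahRep_D : racahRep F t w a d y (D F) = opD t w a d y := racahLift_D ..

theorem racahRep_alpha : racahRep F t w a d y (alpha F) = algebraMap K _ a :=
  (racahLift_alpha ..).trans (opA_opD_relation t w a d y)

theorem racahRep_beta : racahRep F t w a d y (beta F) = algebraMap K _ (phi t w a d (-t)) :=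
  (racahLift_beta ..).trans (opB_opD_relation t w a d y)

theorem racahRep_delta : racahRep F t w a d y (delta F) = algebraMap K _ (2 * d) :=
  racahLift_delta ..

end Operators

end Representation

section TriCoeff

open Polynomial
open scoped Polynomial.Bivariate

variable {k R : Type*} [CommRing k] [CommRing R] [Algebra k R]

variable (k R) in
/-- The coefficients of a sequence of polynomials in `w = Y` and `y = X`, indexed by the exponent
of `w`, the position in the sequence and the exponent of `y`, compared lexicographically in this
order. -/
def triCoeff : (ℤ → R[X][Y]) →ₗ[k] (ℕ ×ₗ ℤ ×ₗ ℕ → R) where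
  toFun v g := ((v (ofLex (ofLex g).2).1).coeff (ofLex g).1).coeff (ofLex (ofLex g).2).2
  map_add' v v' := by
    ext g
    simp
  map_smul' r v := by
    ext g
    simp [Polynomial.coeff_smul]

theorem triCoeff_toLex (v : ℤ → R[X][Y]) (d : ℕ) (s : ℤ) (e : ℕ) :
    triCoeff k R v (toLex (d, toLex (s, e))) = ((v s).coeff d).coeff e := rfl

theorem orderLE_triCoeff_iff {v : ℤ → R[X][Y]} {d : ℕ} {s : ℤ} {e : ℕ} :
    OrderLE (triCoeff k R) (toLex (d, toLex (s, e))) v ↔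
      (∀ d' s', toLex (d, s) < toLex (d', s') → (v s').coeff d' = 0) ∧
        natDegree ((v s).coeff d) ≤ e := by
  simp only [OrderLE, natDegree_le_iff_coeff_eq_zero, Polynomial.ext_iff, coeff_zero]
  constructor
  · intro h
    refine ⟨fun d' s' hlt e' => h (toLex (d', toLex (s', e'))) ?_, fun e' he =>
      h (toLex (d, toLex (s, e'))) ?_⟩
    · simp only [Prod.Lex.toLex_lt_toLex] at hlt ⊢
      tauto
    · simp only [Prod.Lex.toLex_lt_toLex]
      tauto
  · rintro ⟨hlt, he⟩ ⟨d', s', e'⟩ hg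
    obtain hd | ⟨rfl, hg'⟩ := Prod.Lex.toLex_lt_toLex.1 hg
    · exact hlt d' s' (Prod.Lex.toLex_lt_toLex.2 (.inl hd)) e'
    · obtain hs | ⟨rfl, he'⟩ := Prod.Lex.toLex_lt_toLex.1 hg'
      · exact hlt d s' (Prod.Lex.toLex_lt_toLex.2 (.inr ⟨rfl, hs⟩)) e'
      · exact he e' he'

theorem orderLE_single_one : OrderLE (triCoeff k R) (toLex (0, toLex (0, 0))) (Pi.single 0 1) := by
  refine orderLE_triCoeff_iff.2 ⟨fun d s hlt => ?_, by simp⟩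
  obtain hd | ⟨rfl, hs⟩ := Prod.Lex.toLex_lt_toLex.1 hlt
  · by_cases hs : s = 0
    · simp [hs, coeff_one, hd.ne']
    · simp [hs]
  · simp [hs.ne']

theorem triCoeff_single_one :
    triCoeff k R (Pi.single 0 1) (toLex (0, toLex (0, 0))) = 1 := by
  simp [triCoeff_toLex]

section Shift

variable {j : ℤ} {f : ℤ → R[X][Y]} {d : ℕ}

theorem coeff_weightedShift_eq_zero (hf : ∀ n, natDegree (f n) ≤ d) {v : ℤ → R[X][Y]} {d₀ : ℕ}
    {s₀ : ℤ} (hv : ∀ d' s', toLex (d₀, s₀) < toLex (d', s') → (v s').coeff d' = 0) {d' : ℕ} {s' : ℤ}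
    (hlt : toLex (d + d₀, j + s₀) < toLex (d', s')) : (weightedShift j f v s').coeff d' = 0 := by
  rw [weightedShift_apply, coeff_mul]
  refine Finset.sum_eq_zero fun p hp => ?_
  rw [Finset.HasAntidiagonal.mem_antidiagonal] at hp
  obtain hd | hd := lt_or_ge d p.1
  · rw [coeff_eq_zero_of_natDegree_lt ((hf s').trans_lt hd), zero_mul]
  · rw [hv, mul_zero]
    rw [Prod.Lex.toLex_lt_toLex] at hlt ⊢
    omega

theorem hasSymbol_weightedShift (hf : ∀ n, natDegree (f n) ≤ d) {e : ℕ}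
    (hlead : ∀ n, natDegree ((f n).coeff d) ≤ e) {q : R}
    (hq : ∀ n, ((f n).coeff d).coeff e = q) :
    HasSymbol (triCoeff k R) (weightedShift j f) (toLex (d, toLex (j, e))) q := by
  rintro ⟨d₀, s₀, e₀⟩ v hv
  obtain ⟨hv, he₀⟩ := orderLE_triCoeff_iff.1 hv
  have hdeg : natDegree (v s₀) ≤ d₀ := natDegree_le_iff_coeff_eq_zero.2 fun d' hd' =>
    hv d' s₀ (Prod.Lex.toLex_lt_toLex.2 (.inl hd'))
  have hcoeff : (weightedShift j f v (j + s₀)).coeff (d + d₀) =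
      (f (j + s₀)).coeff d * (v s₀).coeff d₀ := by
    rw [weightedShift_apply, add_sub_cancel_left, coeff_mul_add_eq_of_natDegree_le (hf _) hdeg]
  constructor
  · refine orderLE_triCoeff_iff.2 ⟨fun d' s' => coeff_weightedShift_eq_zero hf hv, ?_⟩
    exact hcoeff ▸ natDegree_mul_le_of_le (hlead _) he₀
  · change ((weightedShift j f v (j + s₀)).coeff (d + d₀)).coeff (e + e₀) = _
    rw [hcoeff, coeff_mul_add_eq_of_natDegree_le (hlead _) he₀, hq]
    rfl

theorem hasSymbol_zero_weightedShift (hf : ∀ n, natDegree (f n) ≤ d) {d' : ℕ} {j' : ℤ}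
    (hlt : toLex (d, j) < toLex (d', j')) (e : ℕ) :
    HasSymbol (triCoeff k R) (weightedShift j f) (toLex (d', toLex (j', e))) 0 := by
  rintro ⟨d₀, s₀, e₀⟩ v hv
  obtain ⟨hv, -⟩ := orderLE_triCoeff_iff.1 hv
  have hzero {d'' : ℕ} {s'' : ℤ} (hle : toLex (d' + d₀, j' + s₀) ≤ toLex (d'', s'')) :
      (weightedShift j f v s'').coeff d'' = 0 :=
    coeff_weightedShift_eq_zero hf hv <| (add_lt_add_left hlt (toLex (d₀, s₀))).trans_le hle
  have hlead : (weightedShift j f v (j' + s₀)).coeff (d' + d₀) = 0 := hzero le_rfl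
  constructor
  · exact orderLE_triCoeff_iff.2 ⟨fun d'' s'' hlt' => hzero hlt'.le, by
      change natDegree ((weightedShift j f v (j' + s₀)).coeff (d' + d₀)) ≤ _
      rw [hlead]
      simp⟩
  · change ((weightedShift j f v (j' + s₀)).coeff (d' + d₀)).coeff (e + e₀) = _
    rw [hlead, coeff_zero, zero_mul]

theorem hasSymbol_algebraMap {p : R[X][Y]} (hp : natDegree p ≤ d) {e : ℕ}
    (hlead : natDegree (p.coeff d) ≤ e) {q : R} (hq : (p.coeff d).coeff e = q) :
    HasSymbol (triCoeff k R) (algebraMap R[X][Y] (Module.End R[X][Y] (ℤ → R[X][Y])) p)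
      (toLex (d, toLex (0, e))) q := by
  rw [algebraMap_eq_weightedShift]
  exact hasSymbol_weightedShift (fun _ => hp) (fun _ => hlead) fun _ => hq

end Shift

section Operators

variable (t a d : R)

theorem phi_bivariate (x : R[X]) :
    phi (CC t) Y (CC a) (CC d) (Polynomial.C x) =
      Polynomial.C (phi (Polynomial.C t) 0 (Polynomial.C a) (Polynomial.C d) x) +
        Polynomial.C (2 * x) * Y := by
  simp only [phi, CC, map_add, map_sub, map_mul, map_pow, map_ofNat, map_one, map_zero]
  ring

theorem psi_bivariate (x : R[X]) :
    psi (CC t) Y (CC d) (Polynomial.C x) =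
      Polynomial.C (psi (Polynomial.C t) 0 (Polynomial.C d) x) + Y := by
  simp only [psi, CC, map_add, map_sub, map_mul, map_pow, map_ofNat, map_one, map_zero]
  ring

theorem natDegree_phi_le (x : R[X]) :
    natDegree (phi (CC t) Y (CC a) (CC d) (Polynomial.C x)) ≤ 1 := by
  rw [phi_bivariate]
  compute_degree

theorem coeff_one_phi (x : R[X]) :
    (phi (CC t) Y (CC a) (CC d) (Polynomial.C x)).coeff 1 = 2 * x := by
  simp [phi_bivariate, coeff_C]

theorem natDegree_psi_le (x : R[X]) :
    natDegree (psi (CC t) Y (CC d) (Polynomial.C x)) ≤ 1 := by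
  rw [psi_bivariate]
  compute_degree

theorem coeff_one_psi (x : R[X]) :
    (psi (CC t) Y (CC d) (Polynomial.C x)).coeff 1 = 1 := by
  simp [psi_bivariate]

theorem hasSymbol_opA :
    HasSymbol (triCoeff k R) (opA (Polynomial.C X : R[X][Y])) (toLex (0, toLex (1, 0))) 1 := by
  rw [opA, ← zero_add (1 : R)]
  refine HasSymbol.add (hasSymbol_zero_weightedShift (d := 0) (fun n => ?_) (by decide) 0)
    (hasSymbol_weightedShift (fun n => ?_) (fun n => ?_) fun n => ?_)
  · compute_degree
  · simp
  · simp
  · simp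

theorem hasSymbol_opB :
    HasSymbol (triCoeff k R) (opB (CC t) Y (CC a) (CC d) (Polynomial.C X : R[X][Y]))
      (toLex (1, toLex (-1, 1))) 2 := by
  have hx (n : ℤ) : (Polynomial.C X + (n : R[X][Y]) + 1) = Polynomial.C (X + (n : R[X]) + 1) := by
    simp
  rw [opB, ← zero_add (2 : R)]
  simp only [hx]
  refine HasSymbol.add (hasSymbol_zero_weightedShift (d := 0) (fun n => ?_) (by decide) 1)
    (hasSymbol_weightedShift (fun n => natDegree_phi_le ..) (fun n => ?_) fun n => ?_)
  · compute_degree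
  · rw [coeff_one_phi]
    compute_degree
  · rw [coeff_one_phi]
    compute_degree

theorem hasSymbol_opD :
    HasSymbol (triCoeff k R) (opD (CC t) Y (CC a) (CC d) (Polynomial.C X : R[X][Y]))
      (toLex (1, toLex (0, 0))) (-1) := by
  have hx (n : ℤ) : Polynomial.C X + (n : R[X][Y]) = Polynomial.C (X + (n : R[X])) := by simp
  have hx' (n : ℤ) : Polynomial.C X + (n : R[X][Y]) + 1 = Polynomial.C (X + (n : R[X]) + 1) := by
    simp
  rw [opD, ← zero_add (1 : R), ← add_zero (0 + 1 : R)]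
  refine (HasSymbol.add (HasSymbol.add
    (hasSymbol_zero_weightedShift (d := 0) (fun n => ?_) (by decide) 0)
    (hasSymbol_weightedShift (fun n => ?_) (fun n => ?_) fun n => ?_))
    (hasSymbol_zero_weightedShift (d := 1) (fun n => ?_) (by decide) 0)).neg
  · compute_degree
  · rw [hx]
    exact natDegree_psi_le ..
  · rw [hx, coeff_one_psi, natDegree_one]
  · rw [hx, coeff_one_psi, coeff_one_zero]
  · rw [hx']
    exact natDegree_mul_le_of_le (natDegree_C _).le (natDegree_phi_le ..)

end Operators

end TriCoeff

section PBWSymbols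

open Polynomial
open scoped Polynomial.Bivariate

/-- The degrees of the symbols of `A, B, D, α, β, δ`: the `w`-degree, the shift of position and the
`y`-degree. -/
def pbwDegree : Fin 6 → ℕ ×ₗ ℤ ×ₗ ℕ :=
  ![toLex (0, toLex (1, 0)), toLex (1, toLex (-1, 1)), toLex (1, toLex (0, 0)),
    toLex (0, toLex (0, 0)), toLex (1, toLex (0, 0)), toLex (0, toLex (0, 0))]

/-- The exponents of `(t, a, d)` in the symbols `1, 2, -1, a, -2t, 2d` of `A, B, D, α, β, δ`. -/
def pbwExponent : Fin 6 → Fin 3 →₀ ℕ :=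
  ![0, 0, 0, Finsupp.single 1 1, Finsupp.single 0 1, Finsupp.single 2 1]

/-- The scalar coefficients of the symbols `1, 2, -1, a, -2t, 2d` of `A, B, D, α, β, δ`. -/
def pbwLeadCoeff : Fin 6 → F := ![1, 2, -1, 1, -2, 2]

theorem pbwLeadCoeff_ne_zero (hchar : (2 : F) ≠ 0) (i : Fin 6) : pbwLeadCoeff F i ≠ 0 := by
  fin_cases i <;> simp [pbwLeadCoeff, hchar]

theorem sum_map_pbwDegree (m : Multiset (Fin 6)) :
    (m.map pbwDegree).sum = toLex (m.count 1 + m.count 2 + m.count 4,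
      toLex ((m.count 0 : ℤ) - m.count 1, m.count 1)) := by
  induction m using Multiset.induction_on with
  | empty => rfl
  | cons i m ih =>
    rw [Multiset.map_cons, Multiset.sum_cons, ih]
    fin_cases i <;> simp [pbwDegree, ← toLex_add] <;> omega

theorem sum_map_pbwExponent (m : Multiset (Fin 6)) :
    ⇑(m.map pbwExponent).sum = ![m.count 4, m.count 3, m.count 5] := by
  induction m using Multiset.induction_on with
  | empty =>
    funext r
    fin_cases r <;> rfl
  | cons i m ih =>
    rw [Multiset.map_cons, Multiset.sum_cons, Finsupp.coe_add, ih]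
    funext r
    fin_cases i <;> fin_cases r <;> simp [pbwExponent, add_comm]

theorem injOn_sum_map_pbwExponent (g : ℕ ×ₗ ℤ ×ₗ ℕ) :
    Set.InjOn (fun m : Multiset (Fin 6) => (m.map pbwExponent).sum)
      {m | (m.map pbwDegree).sum = g} := by
  intro m hm m' hm' hexp
  have hdeg := hm.trans hm'.symm
  have hexp' := congrArg DFunLike.coe hexp
  simp only [sum_map_pbwDegree, EmbeddingLike.apply_eq_iff_eq, Prod.mk.injEq] at hdeg
  simp only [sum_map_pbwExponent, Matrix.vecCons_inj] at hexp'
  ext i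
  fin_cases i <;> dsimp <;> omega

variable {F}
variable {R : Type*} [CommRing R] [Algebra F R] (t a d : R)

variable (F) in
/-- The action of the Racah algebra on sequences of polynomials in `w = Y` and `y = X` over `R`. -/
def genericRep : Racah F →ₐ[F] Module.End R[X][Y] (ℤ → R[X][Y]) :=
  racahRep F (CC t) Y (CC a) (CC d) (Polynomial.C X)

theorem phi_CC_neg : phi (CC t) Y (CC a) (CC d) (-CC t) =
    Polynomial.C (Polynomial.C (phi t 0 a d (-t))) + Polynomial.C (Polynomial.C (-2 * t)) * Y := by
  simp only [phi, CC, map_add, map_sub, map_mul, map_pow, map_neg, map_ofNat, map_one, map_zero]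
  ring

theorem aeval_monomial_pbwExponent (i : Fin 6) :
    MvPolynomial.aeval ![t, a, d] (MvPolynomial.monomial (pbwExponent i) (pbwLeadCoeff F i)) =
      ![1, 2, -1, a, -2 * t, 2 * d] i := by
  fin_cases i <;>
    simp [pbwExponent, pbwLeadCoeff, MvPolynomial.aeval_monomial, map_ofNat (algebraMap F R)]

theorem hasSymbol_pbwGen (i : Fin 6) :
    HasSymbol (triCoeff F R) (genericRep F t a d (pbwGen F i)) (pbwDegree i)
      (MvPolynomial.aeval ![t, a, d]
        (MvPolynomial.monomial (pbwExponent i) (pbwLeadCoeff F i))) := by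
  rw [aeval_monomial_pbwExponent]
  fin_cases i
  · change HasSymbol _ (genericRep F t a d (A F)) _ _
    rw [genericRep, racahRep_A]
    exact hasSymbol_opA (k := F)
  · change HasSymbol _ (genericRep F t a d (B F)) _ _
    rw [genericRep, racahRep_B]
    exact hasSymbol_opB (k := F) t a d
  · change HasSymbol _ (genericRep F t a d (D F)) _ _
    rw [genericRep, racahRep_D]
    exact hasSymbol_opD (k := F) t a d
  · change HasSymbol _ (genericRep F t a d (alpha F)) _ _
    rw [genericRep, racahRep_alpha]
    exact hasSymbol_algebraMap (k := F) (natDegree_C _).le (by simp) (by simp)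
  · change HasSymbol _ (genericRep F t a d (beta F)) _ _
    rw [genericRep, racahRep_beta, phi_CC_neg]
    exact hasSymbol_algebraMap (k := F) (by compute_degree) (by simp [coeff_C, -map_mul, -map_neg])
      (by simp [coeff_C])
  · have hCC : (2 : R[X][Y]) * CC d = CC (2 * d) := by simp only [CC, map_mul, map_ofNat]
    change HasSymbol _ (genericRep F t a d (delta F)) _ _
    rw [genericRep, racahRep_delta, hCC]
    exact hasSymbol_algebraMap (k := F) (natDegree_C _).le (by simp [-map_mul]) (by simp)

theorem hasSymbol_pbwMonomial (m : Multiset (Fin 6)) :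
    HasSymbol (triCoeff F R) (genericRep F t a d (pbwMonomial F m)) (m.map pbwDegree).sum
      (MvPolynomial.aeval ![t, a, d]
        (MvPolynomial.monomial (m.map pbwExponent).sum (m.map (pbwLeadCoeff F)).prod)) := by
  have := HasSymbol.list_prod (hasSymbol_pbwGen (F := F) t a d) m.toList
  rw [← Multiset.sum_map_toList, ← Multiset.sum_map_toList, ← Multiset.prod_map_toList,
    monomial_list_sum, pbwMonomial, map_list_prod, map_list_prod, List.map_map, List.map_map]
  exact this

variable {t a d}

theorem noZeroDivisors_of_algebraicIndependent [NoZeroDivisors R] (hchar : (2 : F) ≠ 0)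
    (h : AlgebraicIndependent F ![t, a, d]) : NoZeroDivisors (Racah F) := by
  have : Nontrivial R := h.algebraMap_injective.nontrivial
  have hcoeff (m : Multiset (Fin 6)) : (m.map (pbwLeadCoeff F)).prod ≠ 0 := by
    simp [Multiset.prod_eq_zero_iff, pbwLeadCoeff_ne_zero F hchar]
  exact noZeroDivisors_of_hasSymbol (span_pbwMonomial_eq_top F hchar)
    (hasSymbol_pbwMonomial t a d)
    (fun g => linearIndepOn_aeval_monomial h (injOn_sum_map_pbwExponent g) hcoeff)
    orderLE_single_one (triCoeff_single_one.trans_ne one_ne_zero)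

end PBWSymbols

theorem racah_noZeroDivisors (hchar : (2 : F) ≠ 0) : NoZeroDivisors (Racah F) := by
  refine noZeroDivisors_of_algebraicIndependent (R := MvPolynomial (Fin 3) F) hchar
    (t := MvPolynomial.X 0) (a := MvPolynomial.X 1) (d := MvPolynomial.X 2) ?_
  convert MvPolynomial.algebraicIndependent_X (Fin 3) F using 1
  funext i
  fin_cases i <;> rfl

theorem statement4 (hchar : (2 : F) ≠ 0) :
    ∀ u v : Racah F, u * v = 0 → u = 0 ∨ v = 0 := by
  have := racah_noZeroDivisors F hchar
  exact fun u v => eq_zero_or_eq_zero_of_mul_eq_zero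

end RacahPaper
end
end

section
/- The following equations hold in F[a,b,c] ⊗ U(sl₂): RL = (1⊗y + (c+a−b+1)⊗1)(1⊗y + (a−b−c)⊗1)(1⊗y(y+1) − 1⊗Λ), and LR = (1⊗y + (c+a−b)⊗1)(1⊗y + (a−b−c−1)⊗1)(1⊗y(y−1) − 1⊗Λ). Moreover, each of RL, LR, and [R,L] lies in F[a,b,c] ⊗ U_0 (is homogeneous of degree 0). -/
open scoped TensorProduct

noncomputable section

namespace RacahPaper

variable (F : Type) [Field F]

/-!
Moving `e` or `f` past `y` shifts `y`: `f y = (y + 1) f` and `e (y + 1) = y e`. Since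
`R = (1 ⊗ y + p ⊗ 1)(1 ⊗ f)` and `L = -(1 ⊗ y + q ⊗ 1)(1 ⊗ e)` with `p = c + a - b + 1` and
`q = a - b - c - 1`, moving the middle generator of `RL` or `LR` to the right leaves the product of
two translates of `y` with `-fe` or `-ef`, and the Casimir element expresses these through `y`:
`-fe = y(y + 1) - Λ` and `-ef = y(y - 1) - Λ`.

Homogeneity holds because the subspaces `U_n` are multiplicative, `R` has degree `1` and `L` has
degree `-1`. The point of multiplicativity is that left multiplication by `h` or `f` can be
reordered into the spanning monomials `e^i h^j f^k`, by induction on `i`: moving `h` or `f` past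
one `e` only costs terms of the same degree.
-/

theorem mul_mul_mul_eq_of_semiconjBy {M : Type*} [Semigroup M] {a x y : M}
    (ha : SemiconjBy a x y) (b c : M) : b * a * (x * c) = b * y * (a * c) := by
  rw [mul_assoc, ← mul_assoc a, ha.eq, mul_assoc, ← mul_assoc]

theorem pow_succ_mul_mul {M : Type*} [Monoid M] (a b c : M) (n : ℕ) :
    a ^ (n + 1) * b * c = a * (a ^ n * b * c) := by
  simp only [pow_succ', mul_assoc]

theorem two_mul_tmul_inv_two_smul {K S M : Type*} [Semifield K] [Semiring S] [Algebra K S]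
    [AddCommMonoid M] [Module K M] (two_ne_zero : (2 : K) ≠ 0) (p : S) (u : M) :
    (2 * p) ⊗ₜ[K] ((2 : K)⁻¹ • u) = p ⊗ₜ[K] u := by
  rw [two_mul, ← two_smul K p, TensorProduct.smul_tmul, smul_inv_smul₀ two_ne_zero]

section Translate

variable {K S E : Type*} [CommSemiring K] [CommSemiring S] [Algebra K S] [Semiring E] [Algebra K E]

/-- The translate `1 ⊗ x + p ⊗ 1` of an element `x` by a coefficient `p`. Replacing `x` by `x + 1`
amounts to replacing `p` by `p + 1`. -/
def translate (x : E) (p : S) : S ⊗[K] E := (1 : S) ⊗ₜ[K] x + p ⊗ₜ[K] (1 : E)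

theorem translate_add_one (x : E) (p : S) :
    translate (K := K) (x + 1) p = translate x (p + 1) := by
  rw [translate, translate, TensorProduct.tmul_add, TensorProduct.add_tmul]
  abel

theorem translate_mul_tmul (x u : E) (p q : S) :
    translate (K := K) x p * q ⊗ₜ[K] u = q ⊗ₜ[K] (x * u) + (p * q) ⊗ₜ[K] u := by
  simp only [translate, add_mul, Algebra.TensorProduct.tmul_mul_tmul, one_mul]

theorem semiconjBy_one_tmul_translate {u x x' : E} (hu : SemiconjBy u x x') (p : S) :
    SemiconjBy ((1 : S) ⊗ₜ[K] u) (translate x p) (translate x' p) :=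
  ((SemiconjBy.one_right 1).tmul hu).add_right
    ((SemiconjBy.one_left p).tmul (SemiconjBy.one_right u))

theorem commute_translate (x : E) (p q : S) :
    Commute (translate (K := K) x p) (translate x q) := by
  rw [Commute, SemiconjBy, translate, translate]
  simp only [mul_add, add_mul, Algebra.TensorProduct.tmul_mul_tmul, one_mul, mul_one, mul_comm p q]
  abel

end Translate

section SlTwoRelations

theorem h_mul_e : h F * e F = e F * h F + (2 : F) • e F := by
  have rel := RingQuot.mkAlgHom_rel F (slRel.he (F := F))
  simp only [map_sub, map_mul, map_ofNat] at rel
  rw [two_smul, ← two_mul]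
  exact sub_eq_iff_eq_add'.mp rel

theorem h_mul_f : h F * f F = f F * h F - (2 : F) • f F := by
  have rel := RingQuot.mkAlgHom_rel F (slRel.hf (F := F))
  simp only [map_sub, map_mul, map_neg, map_ofNat] at rel
  rw [two_smul, ← two_mul, sub_eq_add_neg]
  exact sub_eq_iff_eq_add'.mp rel

theorem e_mul_f : e F * f F = f F * e F + h F := by
  have rel := RingQuot.mkAlgHom_rel F (slRel.ef (F := F))
  simp only [map_sub, map_mul] at rel
  exact sub_eq_iff_eq_add'.mp rel

variable {F}

theorem uy_add_uy (hchar : (2 : F) ≠ 0) : uy F + uy F = h F := by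
  rw [uy, ← two_smul F, smul_inv_smul₀ hchar]

theorem semiconjBy_e_uy (hchar : (2 : F) ≠ 0) : SemiconjBy (e F) (uy F + 1) (uy F) := by
  rw [SemiconjBy, uy, mul_add_one, mul_smul_comm, smul_mul_assoc, h_mul_e, smul_add,
    inv_smul_smul₀ hchar]

theorem semiconjBy_f_uy (hchar : (2 : F) ≠ 0) : SemiconjBy (f F) (uy F) (uy F + 1) := by
  rw [SemiconjBy, uy, add_one_mul, mul_smul_comm, smul_mul_assoc, h_mul_f, smul_sub,
    inv_smul_smul₀ hchar, sub_add_cancel]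

theorem uy_mul_uy_sub_one (hchar : (2 : F) ≠ 0) :
    uy F * (uy F - 1) = (4 : F)⁻¹ • (h F * (h F - 2)) := by
  have uy_sub_one : uy F - 1 = (2 : F)⁻¹ • (h F - 2) := by
    rw [uy, smul_sub, ← one_add_one_eq_two (R := U F), ← two_smul F, inv_smul_smul₀ hchar]
  have inv_four : (4 : F)⁻¹ = (2 : F)⁻¹ * (2 : F)⁻¹ := by
    rw [← mul_inv]; norm_num
  rw [uy_sub_one, uy, smul_mul_smul_comm, inv_four]

theorem uy_mul_uy_sub_one_sub_Lam (hchar : (2 : F) ≠ 0) :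
    uy F * (uy F - 1) - Lam F = -(e F * f F) := by
  rw [Lam, uy_mul_uy_sub_one hchar, sub_add_cancel_right]

theorem uy_mul_uy_add_one_sub_Lam (hchar : (2 : F) ≠ 0) :
    uy F * (uy F + 1) - Lam F = -(f F * e F) :=
  calc uy F * (uy F + 1) - Lam F = uy F * (uy F - 1) - Lam F + (uy F + uy F) := by
        rw [mul_add_one, mul_sub_one]
        abel
    _ = -(f F * e F) := by
      rw [uy_mul_uy_sub_one_sub_Lam hchar, uy_add_uy hchar, e_mul_f, neg_add, neg_add_cancel_right]

end SlTwoRelations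

section Ladder

variable {F} {S : Type*} [CommRing S] [Algebra F S]

theorem semiconjBy_one_tmul_f_translate_uy (hchar : (2 : F) ≠ 0) (p : S) :
    SemiconjBy ((1 : S) ⊗ₜ[F] f F) (translate (uy F) p) (translate (uy F) (p + 1)) := by
  rw [← translate_add_one]
  exact semiconjBy_one_tmul_translate (semiconjBy_f_uy hchar) p

theorem semiconjBy_one_tmul_neg_e_translate_uy (hchar : (2 : F) ≠ 0) (p : S) :
    SemiconjBy ((1 : S) ⊗ₜ[F] (-e F)) (translate (uy F) (p + 1)) (translate (uy F) p) := by
  rw [← translate_add_one]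
  exact semiconjBy_one_tmul_translate (semiconjBy_e_uy hchar).neg_left p

/-- The raising operator `(1 ⊗ y + p ⊗ 1)(1 ⊗ f)`, which is `R` for `p = c + a - b + 1`. -/
def raising (p : S) : S ⊗[F] U F := translate (uy F) p * (1 : S) ⊗ₜ[F] f F

/-- The lowering operator `-(1 ⊗ y + q ⊗ 1)(1 ⊗ e)`, which is `L` for `q = a - b - c - 1`. -/
def lowering (q : S) : S ⊗[F] U F := translate (uy F) q * (1 : S) ⊗ₜ[F] (-e F)

theorem raising_mul_lowering (hchar : (2 : F) ≠ 0) (p q : S) :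
    raising p * lowering q =
      translate (uy F) p * translate (uy F) (q + 1) *
        (1 : S) ⊗ₜ[F] (uy F * (uy F + 1) - Lam F) := by
  rw [raising, lowering,
    mul_mul_mul_eq_of_semiconjBy (semiconjBy_one_tmul_f_translate_uy hchar q),
    Algebra.TensorProduct.tmul_mul_tmul, one_mul, mul_neg (f F), uy_mul_uy_add_one_sub_Lam hchar]

theorem lowering_mul_raising (hchar : (2 : F) ≠ 0) (p q : S) :
    lowering q * raising (p + 1) =
      translate (uy F) p * translate (uy F) q * (1 : S) ⊗ₜ[F] (uy F * (uy F - 1) - Lam F) := by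
  rw [raising, lowering,
    mul_mul_mul_eq_of_semiconjBy (semiconjBy_one_tmul_neg_e_translate_uy hchar p),
    Algebra.TensorProduct.tmul_mul_tmul, one_mul, neg_mul (e F), uy_mul_uy_sub_one_sub_Lam hchar,
    (commute_translate (uy F) q p).eq]

theorem Rel_eq_raising (hchar : (2 : F) ≠ 0) : Rel F = raising (pc F + pa F - pb F + 1) := by
  rw [Rel, nux, raising, translate_mul_tmul, mul_one, mul_smul_comm,
    two_mul_tmul_inv_two_smul hchar, ← mul_one (2 : P F), two_mul_tmul_inv_two_smul hchar]

theorem Lel_eq_lowering (hchar : (2 : F) ≠ 0) : Lel F = lowering (pa F - pb F - pc F - 1) := by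
  rw [Lel, nuz, lowering, translate_mul_tmul, mul_one, mul_smul_comm,
    two_mul_tmul_inv_two_smul hchar, ← mul_one (2 : P F), two_mul_tmul_inv_two_smul hchar,
    mul_neg (uy F), TensorProduct.tmul_neg, TensorProduct.tmul_neg, sub_eq_add_neg]

end Ladder

section Grading

variable {F}

theorem monomial_mem_Usub {i j k : ℕ} {n : ℤ} (hn : (k : ℤ) - i = n) :
    e F ^ i * h F ^ j * f F ^ k ∈ Usub F n :=
  Submodule.subset_span ⟨i, j, k, hn, rfl⟩

theorem mul_mem_Usub_of_forall_monomial {m n : ℤ} {a u : U F}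
    (ha : ∀ i j k : ℕ, (k : ℤ) - i = m → a * (e F ^ i * h F ^ j * f F ^ k) ∈ Usub F n)
    (hu : u ∈ Usub F m) : a * u ∈ Usub F n := by
  have span_le : Usub F m ≤ (Usub F n).comap (LinearMap.mulLeft F a) := by
    rw [Usub, Submodule.span_le]
    rintro _ ⟨i, j, k, hm, rfl⟩
    exact ha i j k hm
  exact span_le hu

theorem e_mul_mem_Usub {n : ℤ} {u : U F} (hu : u ∈ Usub F (n + 1)) : e F * u ∈ Usub F n := by
  refine mul_mem_Usub_of_forall_monomial (fun i j k hn ↦ ?_) hu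
  rw [← mul_assoc, ← mul_assoc, ← pow_succ']
  exact monomial_mem_Usub (by push_cast; lia)

theorem h_mul_monomial_mem_Usub (i j k : ℕ) {n : ℤ} (hn : (k : ℤ) - i = n) :
    h F * (e F ^ i * h F ^ j * f F ^ k) ∈ Usub F n := by
  induction i generalizing n with
  | zero =>
    rw [pow_zero, one_mul, ← mul_assoc, ← pow_succ', ← one_mul (h F ^ _), ← pow_zero (e F)]
    exact monomial_mem_Usub hn
  | succ i ih =>
    have degree_eq : (k : ℤ) - i = n + 1 := by push_cast at hn; lia
    rw [pow_succ_mul_mul, ← mul_assoc, h_mul_e, add_mul, mul_assoc, smul_mul_assoc]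
    exact add_mem (e_mul_mem_Usub (ih degree_eq))
      (Submodule.smul_mem _ _ (e_mul_mem_Usub (monomial_mem_Usub degree_eq)))

theorem h_mul_mem_Usub {n : ℤ} {u : U F} (hu : u ∈ Usub F n) : h F * u ∈ Usub F n :=
  mul_mem_Usub_of_forall_monomial (fun i j k ↦ h_mul_monomial_mem_Usub i j k) hu

theorem f_mul_h_pow_mul_f_pow_mem_Usub (j k : ℕ) :
    f F * (h F ^ j * f F ^ k) ∈ Usub F (k + 1) := by
  induction j with
  | zero =>
    simpa [pow_succ'] using monomial_mem_Usub (F := F) (i := 0) (j := 0) (k := k + 1) rfl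
  | succ j ih =>
    have f_mul_h : f F * h F = h F * f F + (2 : F) • f F := by
      rw [h_mul_f, sub_add_cancel]
    rw [pow_succ', mul_assoc, ← mul_assoc, f_mul_h, add_mul, mul_assoc, smul_mul_assoc]
    exact add_mem (h_mul_mem_Usub ih) (Submodule.smul_mem _ _ ih)

theorem f_mul_monomial_mem_Usub (i j k : ℕ) {n : ℤ} (hn : (k : ℤ) - i = n) :
    f F * (e F ^ i * h F ^ j * f F ^ k) ∈ Usub F (n + 1) := by
  induction i generalizing n with
  | zero =>
    obtain rfl : (k : ℤ) = n := by simpa using hn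
    rw [pow_zero, one_mul]
    exact f_mul_h_pow_mul_f_pow_mem_Usub j k
  | succ i ih =>
    have degree_eq : (k : ℤ) - i = n + 1 := by push_cast at hn; lia
    have f_mul_e : f F * e F = e F * f F - h F := eq_sub_of_add_eq (e_mul_f F).symm
    rw [pow_succ_mul_mul, ← mul_assoc, f_mul_e, sub_mul, mul_assoc]
    exact sub_mem (e_mul_mem_Usub (ih degree_eq)) (h_mul_mem_Usub (monomial_mem_Usub degree_eq))

theorem f_mul_mem_Usub {n : ℤ} {u : U F} (hu : u ∈ Usub F n) : f F * u ∈ Usub F (n + 1) :=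
  mul_mem_Usub_of_forall_monomial (fun i j k ↦ f_mul_monomial_mem_Usub i j k) hu

theorem monomial_mul_mem_Usub (i j k : ℕ) {n : ℤ} {u : U F} (hu : u ∈ Usub F n) :
    e F ^ i * h F ^ j * f F ^ k * u ∈ Usub F (k - i + n) := by
  have f_pow_mul_mem : f F ^ k * u ∈ Usub F (k + n) := by
    induction k with
    | zero => simpa using hu
    | succ k ih =>
      rw [pow_succ', mul_assoc, Nat.cast_succ, add_right_comm]
      exact f_mul_mem_Usub ih
  have h_pow_mul_mem : h F ^ j * (f F ^ k * u) ∈ Usub F (k + n) := by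
    induction j with
    | zero => simpa using f_pow_mul_mem
    | succ j ih =>
      rw [pow_succ', mul_assoc]
      exact h_mul_mem_Usub ih
  rw [mul_assoc, mul_assoc]
  induction i with
  | zero => simpa using h_pow_mul_mem
  | succ i ih =>
    rw [pow_succ', mul_assoc]
    have degree_eq : (k : ℤ) - (i + 1 : ℕ) + n + 1 = k - i + n := by lia
    exact e_mul_mem_Usub (degree_eq ▸ ih)

instance : SetLike.GradedMonoid (Usub F) where
  one_mem := by simpa using monomial_mem_Usub (F := F) (i := 0) (j := 0) (k := 0) rfl
  mul_mem m n u v hu hv := by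
    have span_le : Usub F m ≤ (Usub F (m + n)).comap (LinearMap.mulRight F v) := by
      rw [Usub, Submodule.span_le]
      rintro _ ⟨i, j, k, rfl, rfl⟩
      exact monomial_mul_mem_Usub i j k hv
    exact span_le hu

theorem tmul_mem_TU {n : ℤ} (p : P F) {u : U F} (hu : u ∈ Usub F n) : p ⊗ₜ[F] u ∈ TU F n :=
  Submodule.subset_span ⟨p, u, hu, rfl⟩

instance : SetLike.GradedMonoid (TU F) where
  one_mem := tmul_mem_TU 1 (SetLike.one_mem_graded (Usub F))
  mul_mem m n s t hs ht := by
    have mul_le : TU F m * TU F n ≤ TU F (m + n) := by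
      rw [TU, TU, Submodule.span_mul_span, Submodule.span_le]
      rintro _ ⟨_, ⟨p, u, hu, rfl⟩, _, ⟨q, v, hv, rfl⟩, rfl⟩
      simpa using tmul_mem_TU (p * q) (SetLike.mul_mem_graded hu hv)
    exact mul_le (Submodule.mul_mem_mul hs ht)

variable (F)

theorem nux_mem_Usub : nux F ∈ Usub F 1 := by
  have f_mem := monomial_mem_Usub (F := F) (i := 0) (j := 0) (k := 1) rfl
  rw [pow_zero, pow_zero, one_mul, one_mul, pow_one] at f_mem
  exact Submodule.smul_mem _ _ f_mem

theorem nuz_mem_Usub : nuz F ∈ Usub F (-1) := by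
  have e_mem := monomial_mem_Usub (F := F) (i := 1) (j := 0) (k := 0) rfl
  rw [pow_zero, pow_zero, mul_one, mul_one, pow_one] at e_mem
  exact Submodule.smul_mem _ _ e_mem

variable {F}

theorem uy_mul_mem_Usub {n : ℤ} {u : U F} (hu : u ∈ Usub F n) : uy F * u ∈ Usub F n := by
  rw [uy, smul_mul_assoc]
  exact Submodule.smul_mem _ _ (h_mul_mem_Usub hu)

variable (F)

theorem Rel_mem_TU : Rel F ∈ TU F 1 :=
  add_mem (tmul_mem_TU _ (uy_mul_mem_Usub (nux_mem_Usub F))) (tmul_mem_TU _ (nux_mem_Usub F))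

theorem Lel_mem_TU : Lel F ∈ TU F (-1) :=
  sub_mem (neg_mem (tmul_mem_TU _ (uy_mul_mem_Usub (nuz_mem_Usub F))))
    (tmul_mem_TU _ (nuz_mem_Usub F))

end Grading

theorem statement16 (hchar : (2 : F) ≠ 0) :
    Rel F * Lel F =
      ((1 : P F) ⊗ₜ[F] uy F + (pc F + pa F - pb F + 1) ⊗ₜ[F] (1 : U F)) *
        ((1 : P F) ⊗ₜ[F] uy F + (pa F - pb F - pc F) ⊗ₜ[F] (1 : U F)) *
        ((1 : P F) ⊗ₜ[F] (uy F * (uy F + 1)) - (1 : P F) ⊗ₜ[F] Lam F) ∧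
    Lel F * Rel F =
      ((1 : P F) ⊗ₜ[F] uy F + (pc F + pa F - pb F) ⊗ₜ[F] (1 : U F)) *
        ((1 : P F) ⊗ₜ[F] uy F + (pa F - pb F - pc F - 1) ⊗ₜ[F] (1 : U F)) *
        ((1 : P F) ⊗ₜ[F] (uy F * (uy F - 1)) - (1 : P F) ⊗ₜ[F] Lam F) ∧
    Rel F * Lel F ∈ TU F 0 ∧ Lel F * Rel F ∈ TU F 0 ∧
    Rel F * Lel F - Lel F * Rel F ∈ TU F 0 := by
  have hRL := raising_mul_lowering hchar (pc F + pa F - pb F + 1) (pa F - pb F - pc F - 1)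
  have hLR := lowering_mul_raising hchar (pc F + pa F - pb F) (pa F - pb F - pc F - 1)
  rw [← Rel_eq_raising hchar, ← Lel_eq_lowering hchar, TensorProduct.tmul_sub] at hRL hLR
  rw [sub_add_cancel] at hRL
  have mem_RL : Rel F * Lel F ∈ TU F (1 + -1) :=
    SetLike.mul_mem_graded (Rel_mem_TU F) (Lel_mem_TU F)
  have mem_LR : Lel F * Rel F ∈ TU F (-1 + 1) :=
    SetLike.mul_mem_graded (Lel_mem_TU F) (Rel_mem_TU F)
  rw [add_neg_cancel] at mem_RL
  rw [neg_add_cancel] at mem_LR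
  exact ⟨hRL, hLR, mem_RL, mem_LR, sub_mem mem_RL mem_LR⟩

end RacahPaper
end
end
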